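/- Let c be a normalized 𝕋-valued 3-cocycle on the discrete groupoid 𝒢. For a composable pair (h,k), regard w^n(h,k) as the n-th level element over r(h) given by the family (w^n(h,k)(l'))_{l'∈𝒢^{r(h)}}. Then for every composable triple (g,h,k) in 𝒢, every n ≥ 1, and every l ∈ 𝒢^{r(g)}: α_g^n(w^n(h,k))(l) ∘ w^n(g,hk)(l) = c(g,h,k) · (w^n(g,h)(l) ∘ w^n(gh,k)(l)). -/

import Mathlib

open CategoryTheory ComplexConjugate

universe u

/-- `Tup Ω n x y` is the set `𝒢^{x,(n+1)}_y` of composable `(n+1)`-tuples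
`(t₁, …, t_{n+1})` with `r(t₁) = x`, `s(t_i) = r(t_{i+1})` and `s(t_{n+1}) = y`
(morphism composition convention: the groupoid product `g h` is `h ≫ g`). -/
def Tup (Ω : Type u) [Groupoid.{u} Ω] : ℕ → Ω → Ω → Type u
  | 0, x, y => y ⟶ x
  | n + 1, x, y => Σ w : Ω, (w ⟶ x) × Tup Ω n w y

/-- The first entry `t₁` of a composable tuple, as an element of `𝒢^x`. -/
def Tup.head {Ω : Type u} [Groupoid.{u} Ω] : ∀ {n : ℕ} {x y : Ω}, Tup Ω n x y → Σ w : Ω, w ⟶ x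
  | 0, _, y, t => ⟨y, t⟩
  | _ + 1, _, _, t => ⟨t.1, t.2.1⟩

/-- The action `g𝒕 = (g t₁, t₂, …)` of `g` with `s(g) = r(t₁)` on composable tuples. -/
def Tup.act {Ω : Type u} [Groupoid.{u} Ω] :
    ∀ {n : ℕ} {x x' y : Ω}, (x ⟶ x') → Tup Ω n x y → Tup Ω n x' y
  | 0, _, _, _, g, t => t ≫ g
  | _ + 1, _, _, _, g, t => ⟨t.1, t.2.1 ≫ g, t.2.2⟩

/-- The range of the last entry of a composable tuple. -/
def Tup.last {Ω : Type u} [Groupoid.{u} Ω] : ∀ {n : ℕ} {x y : Ω}, Tup Ω n x y → Ω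
  | 0, x, _, _ => x
  | _ + 1, _, _, t => Tup.last t.2.2

/-- The last entry of a composable tuple. -/
def Tup.lastHom {Ω : Type u} [Groupoid.{u} Ω] : ∀ {n : ℕ} {x y : Ω} (t : Tup Ω n x y), y ⟶ t.last
  | 0, _, _, t => t
  | _ + 1, _, _, t => Tup.lastHom t.2.2

/-- A normalized `𝕋`-valued 3-cocycle on the discrete groupoid `Ω`:  `c g h k` is defined for
composable triples (`s(g) = r(h)`, `s(h) = r(k)`), has modulus one, satisfies the 3-cocycle
identity, and is `1` whenever one of the arguments is a unit. -/
structure GpdCocycle (Ω : Type u) [Groupoid.{u} Ω] where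
  c : ∀ {a b cc d : Ω}, (cc ⟶ d) → (b ⟶ cc) → (a ⟶ b) → ℂ
  abs_one : ∀ {a b cc d : Ω} (g : cc ⟶ d) (h : b ⟶ cc) (k : a ⟶ b), ‖c g h k‖ = 1
  identity : ∀ {a b cc d e : Ω} (g : d ⟶ e) (h : cc ⟶ d) (k : b ⟶ cc) (l : a ⟶ b),
    c g h k * conj (c g h (l ≫ k)) * c g (k ≫ h) l * conj (c (h ≫ g) k l) * c h k l = 1
  norm₁ : ∀ {a b cc : Ω} (h : b ⟶ cc) (k : a ⟶ b), c (𝟙 cc) h k = 1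
  norm₂ : ∀ {a b : Ω} {cc : Ω} (g : b ⟶ cc) (k : a ⟶ b), c g (𝟙 b) k = 1
  norm₃ : ∀ {a b cc : Ω} (g : b ⟶ cc) (h : a ⟶ b), c g h (𝟙 a) = 1

/-- The unitary `u_g^n(k)` (for `r(k') = r(g)`): it sends a function `ξ` on
`𝒢^{s(g),(n)}_z` to the function on `𝒢^{r(g),(n)}_z` with `(u_g^n(k)ξ)(g𝒕) =
c(g, t₁, t₁⁻¹g⁻¹k)·ξ(𝒕)`.  (The auxiliary element `k` may have any source.) -/
def uMap {Ω : Type u} [Groupoid.{u} Ω] (C : GpdCocycle Ω) {n : ℕ} {c d z z' : Ω}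
    (g : c ⟶ d) (k : z' ⟶ d) (ξ : Tup Ω n c z → ℂ) : Tup Ω n d z → ℂ :=
  fun s =>
    C.c g (Tup.head (Tup.act (Groupoid.inv g) s)).2
        (k ≫ Groupoid.inv g ≫ Groupoid.inv (Tup.head (Tup.act (Groupoid.inv g) s)).2) *
      ξ (Tup.act (Groupoid.inv g) s)

/-- The inverse of `u_g^n(k)`:  `((u_g^n(k))⁻¹ξ)(𝒕) = conj(c(g,t₁,t₁⁻¹g⁻¹k))·ξ(g𝒕)`. -/
def uMapInv {Ω : Type u} [Groupoid.{u} Ω] (C : GpdCocycle Ω) {n : ℕ} {c d z z' : Ω}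
    (g : c ⟶ d) (k : z' ⟶ d) (ξ : Tup Ω n d z → ℂ) : Tup Ω n c z → ℂ :=
  fun t =>
    conj (C.c g (Tup.head t).2 (k ≫ Groupoid.inv g ≫ Groupoid.inv (Tup.head t).2)) *
      ξ (Tup.act g t)

/-- The unitary `w^n(g,h)`: `(w^n(g,h)ξ)(𝒔) = conj(c(g,h,h⁻¹g⁻¹s₁))·ξ(𝒔)` on functions on
`𝒢^{r(g),(n)}_z`. -/
def wMap {Ω : Type u} [Groupoid.{u} Ω] (C : GpdCocycle Ω) {n : ℕ} {b c d z : Ω}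
    (g : c ⟶ d) (h : b ⟶ c) (ξ : Tup Ω n d z → ℂ) : Tup Ω n d z → ℂ :=
  fun s => conj (C.c g h ((Tup.head s).2 ≫ Groupoid.inv g ≫ Groupoid.inv h)) * ξ s

/-- The inverse of `w^n(g,h)`. -/
def wMapInv {Ω : Type u} [Groupoid.{u} Ω] (C : GpdCocycle Ω) {n : ℕ} {b c d z : Ω}
    (g : c ⟶ d) (h : b ⟶ c) (ξ : Tup Ω n d z → ℂ) : Tup Ω n d z → ℂ :=
  fun s => C.c g h ((Tup.head s).2 ≫ Groupoid.inv g ≫ Groupoid.inv h) * ξ s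

/-- The action `α_g^n` on `n`-th level elements: an `n`-th level element over a unit `x` is a
family `a = (a(k))_{k ∈ 𝒢^x}` of endomorphisms of functions on `𝒢^{x,(n)}_{s(k)}`, and
`α_g^n(a)(k) = u_g^n(k) ∘ a(g⁻¹k) ∘ (u_g^n(k))⁻¹`. -/
def alphaAct {Ω : Type u} [Groupoid.{u} Ω] (C : GpdCocycle Ω) {m : ℕ} {x x' : Ω} (g : x ⟶ x')
    (a : ∀ k : Σ z : Ω, z ⟶ x, (Tup Ω m x k.1 → ℂ) → (Tup Ω m x k.1 → ℂ)) :
    ∀ k : Σ z : Ω, z ⟶ x', (Tup Ω m x' k.1 → ℂ) → (Tup Ω m x' k.1 → ℂ) :=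
  fun k ξ => uMap C g k.2 (a ⟨k.1, k.2 ≫ Groupoid.inv g⟩ (uMapInv C g k.2 ξ))

/-!
All the operators involved act diagonally: `w^n(g,h)` multiplies the value at `𝒕` by a scalar, and
conjugating a diagonal operator by `u_g^n(l)` only moves the scalar from `𝒕` to `g𝒕`, because the
coefficients of `u_g^n(l)` have modulus one and cancel. Writing the first entry of a tuple as
`ghkp`, the two sides of the identity multiply by `conj c(h,k,p) · conj c(g,hk,p)` and by
`c(g,h,k) · conj c(g,h,kp) · conj c(gh,k,p)`, which agree by the cocycle identity at `(g,h,k,p)`.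
-/

namespace Tup

variable {Ω : Type u} [Groupoid.{u} Ω]

theorem act_id : ∀ {n : ℕ} {x y : Ω} (t : Tup Ω n x y), act (𝟙 x) t = t
  | 0, _, _, t => Category.comp_id (obj := Ω) t
  | n + 1, x, y, ⟨w, p, q⟩ =>
    congrArg (fun r : w ⟶ x => (⟨w, r, q⟩ : Tup Ω (n + 1) x y)) (Category.comp_id p)

theorem act_act : ∀ {n : ℕ} {x x' x'' y : Ω} (f : x ⟶ x') (g : x' ⟶ x'') (t : Tup Ω n x y),
    act g (act f t) = act (f ≫ g) t
  | 0, _, _, _, _, f, g, t => Category.assoc (obj := Ω) t f g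
  | n + 1, _, _, x'', y, f, g, ⟨w, p, q⟩ =>
    congrArg (fun r : w ⟶ x'' => (⟨w, r, q⟩ : Tup Ω (n + 1) x'' y)) (Category.assoc p f g)

theorem act_act_inv {n : ℕ} {x x' y : Ω} (g : x ⟶ x') (t : Tup Ω n x' y) :
    act g (act (Groupoid.inv g) t) = t := by
  rw [act_act, Groupoid.inv_comp, act_id]

theorem head_act : ∀ {n : ℕ} {x x' y : Ω} (g : x ⟶ x') (t : Tup Ω n x y),
    head (act g t) = ⟨(head t).1, (head t).2 ≫ g⟩
  | 0, _, _, _, _, _ => rfl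
  | _ + 1, _, _, _, _, _ => rfl

theorem exists_head_eq_comp {n : ℕ} {x x' y : Ω} (g : x ⟶ x') (t : Tup Ω n x' y) :
    ∃ (w : Ω) (p : w ⟶ x), head t = ⟨w, p ≫ g⟩ :=
  ⟨(head t).1, (head t).2 ≫ Groupoid.inv g, by simp⟩

end Tup

namespace GpdCocycle

variable {Ω : Type u} [Groupoid.{u} Ω] (C : GpdCocycle Ω)

theorem conj_c {a b c d : Ω} (g : c ⟶ d) (h : b ⟶ c) (k : a ⟶ b) :
    conj (C.c g h k) = (C.c g h k)⁻¹ :=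
  (Complex.inv_eq_conj (C.abs_one g h k)).symm

theorem c_mul_conj {a b c d : Ω} (g : c ⟶ d) (h : b ⟶ c) (k : a ⟶ b) :
    C.c g h k * conj (C.c g h k) = 1 := by
  rw [Complex.mul_conj', C.abs_one, Complex.ofReal_one, one_pow]

theorem c_mul_conj_mul_conj {a b c d e : Ω} (g : d ⟶ e) (h : c ⟶ d) (k : b ⟶ c) (l : a ⟶ b) :
    C.c g h k * conj (C.c g h (l ≫ k)) * conj (C.c (h ≫ g) k l) =
      conj (C.c h k l) * conj (C.c g (k ≫ h) l) := by
  have mul_eq_one : C.c g h k * conj (C.c g h (l ≫ k)) * conj (C.c (h ≫ g) k l) *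
      (C.c h k l * C.c g (k ≫ h) l) = 1 := by
    linear_combination C.identity g h k l
  rw [eq_inv_of_mul_eq_one_left mul_eq_one, mul_inv, conj_c, conj_c]

end GpdCocycle

section Operators

variable {Ω : Type u} [Groupoid.{u} Ω] (C : GpdCocycle Ω)

theorem wMap_apply_of_head_eq {n : ℕ} {b c d w z : Ω} (g : c ⟶ d) (h : b ⟶ c) {p : w ⟶ b}
    {t : Tup Ω n d z} (ht : Tup.head t = ⟨w, p ≫ h ≫ g⟩) (ξ : Tup Ω n d z → ℂ) :
    wMap C g h ξ t = conj (C.c g h p) * ξ t := by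
  rw [wMap, ht]
  simp

theorem uMap_uMapInv_apply {n : ℕ} {c d z z' : Ω} (g : c ⟶ d) (k : z' ⟶ d) (ξ : Tup Ω n d z → ℂ)
    (t : Tup Ω n d z) : uMap C g k (uMapInv C g k ξ) t = ξ t := by
  simp only [uMap, uMapInv]
  rw [← mul_assoc, C.c_mul_conj, one_mul, Tup.act_act_inv]

theorem alphaAct_apply_of_apply_eq_mul {m : ℕ} {x x' : Ω} (g : x ⟶ x')
    {a : ∀ k : Σ z : Ω, z ⟶ x, (Tup Ω m x k.1 → ℂ) → (Tup Ω m x k.1 → ℂ)}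
    (k : Σ z : Ω, z ⟶ x') {t : Tup Ω m x' k.1} {v : ℂ}
    (ha : ∀ η, a ⟨k.1, k.2 ≫ Groupoid.inv g⟩ η (Tup.act (Groupoid.inv g) t) =
      v * η (Tup.act (Groupoid.inv g) t))
    (ξ : Tup Ω m x' k.1 → ℂ) : alphaAct C g a k ξ t = v * ξ t := by
  rw [← uMap_uMapInv_apply C g k.2 ξ t]
  simp only [alphaAct, uMap, ha]
  exact mul_left_comm _ _ _

theorem alphaAct_wMap_apply_of_head_eq {m : ℕ} {a b c d w : Ω} (g : c ⟶ d) (h : b ⟶ c)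
    (k : a ⟶ b) (l : Σ z : Ω, z ⟶ d) {p : w ⟶ a} {t : Tup Ω m d l.1}
    (ht : Tup.head t = ⟨w, p ≫ k ≫ h ≫ g⟩) (ξ : Tup Ω m d l.1 → ℂ) :
    alphaAct C g (fun _ ξ' => wMap C h k ξ') l ξ t = conj (C.c h k p) * ξ t := by
  have head_inv_act : Tup.head (Tup.act (Groupoid.inv g) t) = ⟨w, p ≫ k ≫ h⟩ := by
    rw [Tup.head_act, ht]
    simp
  exact alphaAct_apply_of_apply_eq_mul C g l (wMap_apply_of_head_eq C h k head_inv_act) ξ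

end Operators

/-- regarding `w^n(h,k)` as the `n`-th level element
`(w^n(h,k)(l'))_{l' ∈ 𝒢^{r(h)}}` over `r(h)`, for every composable triple `(g,h,k)`, every
`n ≥ 1` (tuples of length `n = m + 1`) and every `l ∈ 𝒢^{r(g)}`:
`α_g^n(w^n(h,k))(l) ∘ w^n(g,hk)(l) = c(g,h,k) · (w^n(g,h)(l) ∘ w^n(gh,k)(l))`. -/
theorem alphaAct_wMap {Ω : Type u} [Groupoid.{u} Ω] (C : GpdCocycle Ω) (m : ℕ)
    {a b cc d : Ω} (k : a ⟶ b) (h : b ⟶ cc) (g : cc ⟶ d)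
    (l : Σ z : Ω, z ⟶ d) (ξ : Tup Ω m d l.1 → ℂ) (t : Tup Ω m d l.1) :
    alphaAct C g (fun _ ξ' => wMap C h k ξ') l (wMap C g (k ≫ h) ξ) t =
      C.c g h k * wMap C g h (wMap C (h ≫ g) k ξ) t := by
  obtain ⟨w, p, ht⟩ := Tup.exists_head_eq_comp (k ≫ h ≫ g) t
  calc
    alphaAct C g (fun _ ξ' => wMap C h k ξ') l (wMap C g (k ≫ h) ξ) t
    _ = conj (C.c h k p) * (conj (C.c g (k ≫ h) p) * ξ t) := by
      rw [alphaAct_wMap_apply_of_head_eq C g h k l ht,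
        wMap_apply_of_head_eq C g (k ≫ h) (by simpa using ht)]
    _ = C.c g h k * (conj (C.c g h (p ≫ k)) * (conj (C.c (h ≫ g) k p) * ξ t)) := by
      linear_combination -ξ t * C.c_mul_conj_mul_conj g h k p
    _ = C.c g h k * wMap C g h (wMap C (h ≫ g) k ξ) t := by
      rw [wMap_apply_of_head_eq C g h (p := p ≫ k) (by simpa using ht),
        wMap_apply_of_head_eq C (h ≫ g) k ht]
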